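/- Let d ≥ 1, T > 0, x₀ ∈ ℝ^d, and let f : ℝ → ℝ satisfy Assumption (f) with constants κ ∈ ℝ, K > 0, ν > 0; write f(u) = φ(u) + κu where φ(u) := f(u) - κu is non-increasing, and let f_λ(u) := φ_λ(u) + κu be its Yosida-type approximations. Let θ ∈ (0, 2/ν) and z ∈ C_{θ,x₀}. For each λ ∈ (0,1) let m_λ ∈ C_{θ,x₀} be a solution of m_λ(t,x) = ∫_0^t ∫_{ℝ^d} G(t-s, x-y) f_λ(m_λ(s,y)) dy ds + z(t,x) for all (t,x), and let m ∈ C_{θ,x₀} be a solution of m(t,x) = ∫_0^t ∫_{ℝ^d} G(t-s, x-y) f(m(s,y)) dy ds + z(t,x) for all (t,x). Then for every (t,x) ∈ [0,T]×ℝ^d, lim_{λ → 0⁺} m_λ(t,x) = m(t,x). -/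

import Mathlib

open MeasureTheory

/-- The heat kernel of `(1/2)Δ` on `ℝ^d`. -/
noncomputable def heatKernel (d : ℕ) (t : ℝ) (x : EuclideanSpace ℝ (Fin d)) : ℝ :=
  (2 * Real.pi * t) ^ (-(d : ℝ) / 2) * Real.exp (-‖x‖ ^ 2 / (2 * t))

/-- The weighted supremum norm `sup_{t ∈ [0,T]} sup_x |z(t,x)|/(1+‖x-x₀‖^θ)`. -/
noncomputable def wNorm (d : ℕ) (T θ : ℝ) (x₀ : EuclideanSpace ℝ (Fin d))
    (z : ℝ → EuclideanSpace ℝ (Fin d) → ℝ) : ℝ :=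
  ⨆ (t : Set.Icc (0 : ℝ) T) (x : EuclideanSpace ℝ (Fin d)),
    |z t.1 x| / (1 + ‖x - x₀‖ ^ θ)

/-- Membership in the weighted space `C_{θ,x₀}([0,T] × ℝ^d)`: continuity on
`[0,T] × ℝ^d` together with vanishing of the weighted quotient at spatial
infinity (uniformly in `t ∈ [0,T]`). -/
def memC (d : ℕ) (T θ : ℝ) (x₀ : EuclideanSpace ℝ (Fin d))
    (z : ℝ → EuclideanSpace ℝ (Fin d) → ℝ) : Prop :=
  ContinuousOn (fun p : ℝ × EuclideanSpace ℝ (Fin d) => z p.1 p.2)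
      (Set.Icc 0 T ×ˢ Set.univ) ∧
  ∀ ε > 0, ∃ R : ℝ, ∀ x : EuclideanSpace ℝ (Fin d), R ≤ ‖x‖ →
    ∀ t ∈ Set.Icc (0 : ℝ) T, |z t x| / (1 + ‖x - x₀‖ ^ θ) < ε


/-- The resolvent `J_λ = (I - λφ)⁻¹` of a (continuous, non-increasing) function
`φ : ℝ → ℝ`. -/
noncomputable def Jlam (φ : ℝ → ℝ) (lam : ℝ) : ℝ → ℝ :=
  Function.invFun (fun u : ℝ => u - lam * φ u)

/-- The Yosida approximation `φ_λ(u) = (J_λ(u) - u)/λ`. -/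
noncomputable def yosida (φ : ℝ → ℝ) (lam : ℝ) (u : ℝ) : ℝ :=
  (Jlam φ lam u - u) / lam

/-!
Write `D_α F` for the solution of `∂ₜ u = Δu/2 + α u + F`, `u(0) = 0`, given by Duhamel's formula.
The difference `w = m_λ - m` equals `D_0 F` with `F = f_λ(m_λ) - f(m)`. Composing discounted heat
kernels gives the resolvent identity `D_α F = D_β (F + (α - β) D_α F)`, hence
`w = D_{κ-1/λ} (F + (1/λ - κ) w)`. Since `φ_λ + 1/λ = J_λ/λ` with `J_λ` nonexpansive, the new source
is at most `|w|/λ + |φ_λ(m) - φ(m)|` in absolute value, so positivity of the kernel and Gronwall's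
inequality give `|w| ≤ D_κ |φ_λ(m) - φ(m)|`. As `λ → 0⁺` the right side tends to zero by dominated
convergence, because `|φ_λ| ≤ |φ|` and `φ_λ → φ` pointwise.

All integrals converge because `θν < 2` makes `exp(B |m|^ν)` smaller than a Gaussian
`exp(δ|x - x₀|²)`, which is dominated by a solution of the heat equation blowing up only after
time `T`.
-/

section GaussianIntegral

variable {V : Type*} [NormedAddCommGroup V] [InnerProductSpace ℝ V]

lemma mul_norm_sub_sq_add_mul_norm_sub_sq {p q : ℝ} (hpq : p + q ≠ 0) (x y z : V) :
    p * ‖x - y‖ ^ 2 + q * ‖y - z‖ ^ 2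
      = (p + q) * ‖y - (z + (p / (p + q)) • (x - z))‖ ^ 2 + p * q / (p + q) * ‖x - z‖ ^ 2 := by
  have hx : x - y = (x - z) - (y - z) := by abel
  have hy : y - (z + (p / (p + q)) • (x - z)) = (y - z) - (p / (p + q)) • (x - z) := by abel
  rw [hx, hy]
  generalize x - z = a
  generalize y - z = b
  rw [norm_sub_sq_real, norm_sub_sq_real, inner_smul_right, norm_smul, mul_pow,
    real_inner_comm, Real.norm_eq_abs, sq_abs]
  field_simp
  ring

lemma integral_exp_neg_mul_norm_sub_sq_add [FiniteDimensional ℝ V] [MeasurableSpace V]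
    [BorelSpace V] {p q : ℝ} (hpq : 0 < p + q) (x z : V) :
    ∫ y, Real.exp (-(p * ‖x - y‖ ^ 2 + q * ‖y - z‖ ^ 2))
      = (Real.pi / (p + q)) ^ ((Module.finrank ℝ V : ℝ) / 2)
        * Real.exp (-(p * q / (p + q) * ‖x - z‖ ^ 2)) := by
  simp_rw [mul_norm_sub_sq_add_mul_norm_sub_sq hpq.ne', neg_add, Real.exp_add, ← neg_mul]
  rw [integral_mul_const,
    integral_sub_right_eq_self (fun y : V => Real.exp (-(p + q) * ‖y‖ ^ 2)),
    GaussianFourier.integral_rexp_neg_mul_sq_norm hpq]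

end GaussianIntegral

section GaussianProfile

variable {d : ℕ}

/-- The Gaussian caloric function `|τ|^{-d/2} exp(-|x|²/(2τ))`. For `τ > 0` it is the heat kernel
up to a constant; for `τ < 0` it is a solution of the heat equation with Gaussian growth, which
serves as a weight. -/
noncomputable def gaussianProfile (τ : ℝ) (x : EuclideanSpace ℝ (Fin d)) : ℝ :=
  |τ| ^ (-(d : ℝ) / 2) * Real.exp (-‖x‖ ^ 2 / (2 * τ))

lemma gaussianProfile_nonneg (τ : ℝ) (x : EuclideanSpace ℝ (Fin d)) :
    0 ≤ gaussianProfile τ x := by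
  unfold gaussianProfile
  positivity

lemma gaussianProfile_pos {τ : ℝ} (hτ : τ ≠ 0) (x : EuclideanSpace ℝ (Fin d)) :
    0 < gaussianProfile τ x := by
  unfold gaussianProfile
  positivity

lemma measurable_gaussianProfile :
    Measurable fun p : ℝ × EuclideanSpace ℝ (Fin d) => gaussianProfile p.1 p.2 := by
  unfold gaussianProfile
  fun_prop

lemma heatKernel_eq_gaussianProfile {t : ℝ} (ht : 0 ≤ t) (x : EuclideanSpace ℝ (Fin d)) :
    heatKernel d t x = (2 * Real.pi) ^ (-(d : ℝ) / 2) * gaussianProfile t x := by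
  rw [heatKernel, gaussianProfile, Real.mul_rpow (by positivity) ht, abs_of_nonneg ht, mul_assoc]

/-- For `b > 0` this is the Chapman–Kolmogorov identity; for `b < 0` it says that the growing
profile is propagated by the heat semigroup until its blow-up time. -/
lemma integral_heatKernel_mul_gaussianProfile {a b : ℝ} (ha : 0 < a) (hab : 0 < (a + b) / b)
    (x z : EuclideanSpace ℝ (Fin d)) :
    ∫ y, heatKernel d a (x - y) * gaussianProfile b (y - z) = gaussianProfile (a + b) (x - z) := by
  have hb : b ≠ 0 := by rintro rfl; simp at hab
  have hsum : 1 / (2 * a) + 1 / (2 * b) = (a + b) / b / (2 * a) := by field_simp; ring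
  have hab0 : a + b ≠ 0 := by intro h; simp [h] at hab
  have hprod (y : EuclideanSpace ℝ (Fin d)) :
      heatKernel d a (x - y) * gaussianProfile b (y - z)
        = (2 * Real.pi * a) ^ (-(d : ℝ) / 2) * |b| ^ (-(d : ℝ) / 2)
          * Real.exp (-(1 / (2 * a) * ‖x - y‖ ^ 2 + 1 / (2 * b) * ‖y - z‖ ^ 2)) := by
    rw [heatKernel, gaussianProfile, neg_add, Real.exp_add]
    ring_nf
  have hconst : (2 * Real.pi * a) ^ (-(d : ℝ) / 2) * |b| ^ (-(d : ℝ) / 2)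
      * (Real.pi / ((a + b) / b / (2 * a))) ^ ((d : ℝ) / 2) = |a + b| ^ (-(d : ℝ) / 2) := by
    have habs : |a + b| = (a + b) / b * |b| := by
      rw [← abs_of_pos hab, ← abs_mul, div_mul_cancel₀ _ hb]
    have hdiv : Real.pi / ((a + b) / b / (2 * a)) = 2 * Real.pi * a / ((a + b) / b) := by
      field_simp
    rw [habs, Real.mul_rpow hab.le (abs_nonneg b), hdiv,
      Real.div_rpow (by positivity) hab.le, neg_div, Real.rpow_neg (by positivity),
      Real.rpow_neg hab.le]
    field_simp
  simp_rw [hprod]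
  rw [integral_const_mul, integral_exp_neg_mul_norm_sub_sq_add (by rw [hsum]; positivity), hsum,
    finrank_euclideanSpace_fin, ← mul_assoc, hconst, gaussianProfile]
  congr 2
  field_simp

lemma integrable_heatKernel_mul_gaussianProfile {a b : ℝ} (ha : 0 < a) (hab : 0 < (a + b) / b)
    (x z : EuclideanSpace ℝ (Fin d)) :
    Integrable fun y => heatKernel d a (x - y) * gaussianProfile b (y - z) := by
  refine .of_integral_ne_zero ?_
  rw [integral_heatKernel_mul_gaussianProfile ha hab]
  exact (gaussianProfile_pos (by rintro h; simp [h] at hab) _).ne'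

lemma exp_le_mul_gaussianProfile {s c : ℝ} (hs : 0 ≤ s) (hsc : s < c)
    (x : EuclideanSpace ℝ (Fin d)) :
    Real.exp (1 / (2 * c) * ‖x‖ ^ 2) ≤ c ^ ((d : ℝ) / 2) * gaussianProfile (s - c) x := by
  have hcs : 0 < c - s := sub_pos.2 hsc
  have hscale : 1 ≤ c ^ ((d : ℝ) / 2) * |s - c| ^ (-(d : ℝ) / 2) := by
    rw [abs_sub_comm, abs_of_pos hcs, neg_div, Real.rpow_neg hcs.le, ← div_eq_mul_inv,
      one_le_div (by positivity)]
    exact Real.rpow_le_rpow hcs.le (by linarith) (by positivity)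
  have hexp : 1 / (2 * c) * ‖x‖ ^ 2 ≤ -‖x‖ ^ 2 / (2 * (s - c)) := by
    rw [← neg_sub c s, mul_neg, neg_div_neg_eq, one_div_mul_eq_div]
    gcongr
    linarith
  calc Real.exp (1 / (2 * c) * ‖x‖ ^ 2)
      ≤ 1 * Real.exp (-‖x‖ ^ 2 / (2 * (s - c))) := by rw [one_mul]; gcongr
    _ ≤ c ^ ((d : ℝ) / 2) * |s - c| ^ (-(d : ℝ) / 2) * Real.exp (-‖x‖ ^ 2 / (2 * (s - c))) := by
        gcongr
    _ = c ^ ((d : ℝ) / 2) * gaussianProfile (s - c) x := by rw [gaussianProfile, mul_assoc]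

end GaussianProfile

section DuhamelKernel

open Set

variable {d : ℕ} {T : ℝ}

/-- Points `(t, x)` of `ℝ × ℝ^d`. -/
abbrev SpaceTime (d : ℕ) : Type := ℝ × EuclideanSpace ℝ (Fin d)

/-- Lebesgue measure on the slab `(0, T] × ℝ^d`. -/
noncomputable abbrev slabMeasure (d : ℕ) (T : ℝ) : Measure (SpaceTime d) :=
  (volume.restrict (Ioc 0 T)).prod volume

lemma ae_slabMeasure_mem : ∀ᵐ p ∂slabMeasure d T, p.1 ∈ Ioc 0 T :=
  Measure.quasiMeasurePreserving_fst.ae (ae_restrict_mem measurableSet_Ioc)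

/-- The Gaussian profile centred at `(τ, z)`, switched on at time `a` and growing at rate `γ`.
Both the discounted heat kernel (`a = τ`) and the growth weight (`a = 0 < c = τ`) are of this form,
so that a single computation covers the kernel composition and the weight estimate. -/
noncomputable def causalGaussian (γ a τ : ℝ) (z : EuclideanSpace ℝ (Fin d)) (p : SpaceTime d) : ℝ :=
  if a < p.1 then Real.exp (γ * (p.1 - a)) * gaussianProfile (p.1 - τ) (p.2 - z) else 0

/-- The kernel `exp(α (t - s)) G(t - s, x - y)` of the Duhamel operator for `∂ₜ - Δ/2 - α`,
extended by zero to `t ≤ s`. -/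
noncomputable def duhamelKernel (α : ℝ) (q p : SpaceTime d) : ℝ :=
  if p.1 < q.1 then Real.exp (α * (q.1 - p.1)) * heatKernel d (q.1 - p.1) (q.2 - p.2) else 0

lemma duhamelKernel_of_lt {α : ℝ} {q p : SpaceTime d} (h : p.1 < q.1) :
    duhamelKernel α q p
      = Real.exp (α * (q.1 - p.1)) * heatKernel d (q.1 - p.1) (q.2 - p.2) :=
  if_pos h

lemma duhamelKernel_of_le {α : ℝ} {q p : SpaceTime d} (h : q.1 ≤ p.1) : duhamelKernel α q p = 0 :=
  if_neg h.not_gt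

lemma duhamelKernel_eq_causalGaussian (α : ℝ) (q p : SpaceTime d) :
    duhamelKernel α q p = (2 * Real.pi) ^ (-(d : ℝ) / 2) * causalGaussian α p.1 p.1 p.2 q := by
  unfold duhamelKernel causalGaussian
  split_ifs with h
  · rw [heatKernel_eq_gaussianProfile (sub_pos.2 h).le]
    ring
  · rw [mul_zero]

lemma causalGaussian_nonneg (γ a τ : ℝ) (z : EuclideanSpace ℝ (Fin d)) (p : SpaceTime d) :
    0 ≤ causalGaussian γ a τ z p := by
  unfold causalGaussian
  split_ifs
  · exact mul_nonneg (Real.exp_nonneg _) (gaussianProfile_nonneg _ _)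
  · exact le_rfl

lemma duhamelKernel_nonneg (α : ℝ) (q p : SpaceTime d) : 0 ≤ duhamelKernel α q p := by
  rw [duhamelKernel_eq_causalGaussian]
  exact mul_nonneg (by positivity) (causalGaussian_nonneg _ _ _ _ _)

lemma measurable_causalGaussian (γ a τ : ℝ) (z : EuclideanSpace ℝ (Fin d)) :
    Measurable (causalGaussian γ a τ z) := by
  have hprofile : Measurable fun p : SpaceTime d => gaussianProfile (p.1 - τ) (p.2 - z) :=
    measurable_gaussianProfile.comp (by fun_prop : Measurable fun p : SpaceTime d =>
      ((p.1 - τ, p.2 - z) : SpaceTime d))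
  exact Measurable.ite (measurableSet_lt measurable_const measurable_fst) (by fun_prop)
    measurable_const

lemma measurable_duhamelKernel (α : ℝ) :
    Measurable fun r : SpaceTime d × SpaceTime d => duhamelKernel α r.1 r.2 := by
  refine Measurable.ite (measurableSet_lt measurable_snd.fst measurable_fst.fst) ?_
    measurable_const
  unfold heatKernel
  fun_prop

lemma measurable_duhamelKernel_right (α : ℝ) (q : SpaceTime d) :
    Measurable (duhamelKernel α q) :=
  (measurable_duhamelKernel α).comp measurable_prodMk_left

lemma sub_mul_integral_exp_mul_exp (α γ r t : ℝ) :
    (γ - α) * ∫ s in r..t, Real.exp (α * (t - s)) * Real.exp (γ * (s - r))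
      = Real.exp (γ * (t - r)) - Real.exp (α * (t - r)) := by
  have hderiv (s : ℝ) : HasDerivAt (fun s => Real.exp (α * (t - s)) * Real.exp (γ * (s - r)))
      ((γ - α) * (Real.exp (α * (t - s)) * Real.exp (γ * (s - r)))) s := by
    have hα := (((hasDerivAt_id s).const_sub t).const_mul α).exp
    have hγ := (((hasDerivAt_id s).sub_const r).const_mul γ).exp
    exact (hα.mul hγ).congr_deriv (by simp only [id]; ring)
  rw [← intervalIntegral.integral_const_mul, intervalIntegral.integral_eq_sub_of_hasDerivAt
    (fun s _ => hderiv s) (Continuous.intervalIntegrable (by fun_prop) _ _)]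
  simp

section Composition

variable {α γ a τ : ℝ} {z : EuclideanSpace ℝ (Fin d)} {q : SpaceTime d}

lemma duhamelKernel_mul_causalGaussian_slice {s : ℝ} (hs : s ∈ Ioo a q.1)
    (y : EuclideanSpace ℝ (Fin d)) :
    duhamelKernel α q (s, y) * causalGaussian γ a τ z (s, y)
      = Real.exp (α * (q.1 - s)) * Real.exp (γ * (s - a))
        * (heatKernel d (q.1 - s) (q.2 - y) * gaussianProfile (s - τ) (y - z)) := by
  rw [duhamelKernel_of_lt hs.2, causalGaussian, if_pos hs.1]
  ring

lemma duhamelKernel_mul_causalGaussian_eq_zero {p : SpaceTime d} (hp : p.1 ∉ Ioo a q.1) :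
    duhamelKernel α q p * causalGaussian γ a τ z p = 0 := by
  by_cases ha : a < p.1
  · rw [duhamelKernel_of_le (not_lt.1 fun h => hp ⟨ha, h⟩), zero_mul]
  · rw [causalGaussian, if_neg ha, mul_zero]

lemma integral_duhamelKernel_mul_causalGaussian_slice
    (hτ : ∀ s ∈ Ioo a q.1, 0 < (q.1 - τ) / (s - τ)) (s : ℝ) :
    ∫ y, duhamelKernel α q (s, y) * causalGaussian γ a τ z (s, y)
      = (Ioo a q.1).indicator (fun s => Real.exp (α * (q.1 - s)) * Real.exp (γ * (s - a))
          * gaussianProfile (q.1 - τ) (q.2 - z)) s := by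
  by_cases hs : s ∈ Ioo a q.1
  · have hsum : q.1 - s + (s - τ) = q.1 - τ := by ring
    simp_rw [indicator_of_mem hs, duhamelKernel_mul_causalGaussian_slice hs]
    rw [integral_const_mul, integral_heatKernel_mul_gaussianProfile (sub_pos.2 hs.2)
      (by rw [hsum]; exact hτ s hs), hsum]
  · simp_rw [indicator_of_notMem hs]
    simp [duhamelKernel_mul_causalGaussian_eq_zero (p := (s, _)) hs]

lemma integrable_duhamelKernel_mul_causalGaussian
    (hτ : ∀ s ∈ Ioo a q.1, 0 < (q.1 - τ) / (s - τ)) :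
    Integrable (fun p => duhamelKernel α q p * causalGaussian γ a τ z p) (slabMeasure d T) := by
  have hmeas : Measurable fun p => duhamelKernel α q p * causalGaussian γ a τ z p :=
    (measurable_duhamelKernel_right α q).mul (measurable_causalGaussian γ a τ z)
  refine (integrable_prod_iff hmeas.aestronglyMeasurable).2 ⟨.of_forall fun s => ?_, ?_⟩
  · by_cases hs : s ∈ Ioo a q.1
    · simp_rw [duhamelKernel_mul_causalGaussian_slice hs]
      refine (integrable_heatKernel_mul_gaussianProfile (sub_pos.2 hs.2) ?_ _ _).const_mul _
      rw [show q.1 - s + (s - τ) = q.1 - τ by ring]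
      exact hτ s hs
    · simp [duhamelKernel_mul_causalGaussian_eq_zero (p := (s, _)) hs]
  · simp_rw [Real.norm_of_nonneg (mul_nonneg (duhamelKernel_nonneg _ _ _)
      (causalGaussian_nonneg _ _ _ _ _)), integral_duhamelKernel_mul_causalGaussian_slice hτ]
    refine Integrable.integrableOn ?_
    rw [integrable_indicator_iff measurableSet_Ioo]
    exact ((Continuous.continuousOn (by fun_prop)).integrableOn_compact isCompact_Icc).mono_set
      Ioo_subset_Icc_self

lemma sub_mul_integral_duhamelKernel_mul_causalGaussian (ha : 0 ≤ a) (haq : a ≤ q.1)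
    (hqT : q.1 ≤ T) (hτ : ∀ s ∈ Ioo a q.1, 0 < (q.1 - τ) / (s - τ)) :
    (γ - α) * ∫ p, duhamelKernel α q p * causalGaussian γ a τ z p ∂slabMeasure d T
      = (Real.exp (γ * (q.1 - a)) - Real.exp (α * (q.1 - a)))
        * gaussianProfile (q.1 - τ) (q.2 - z) := by
  have hsub : Ioo a q.1 ⊆ Ioc 0 T := fun s hs => ⟨ha.trans_lt hs.1, hs.2.le.trans hqT⟩
  rw [integral_prod _ (integrable_duhamelKernel_mul_causalGaussian hτ)]
  simp_rw [integral_duhamelKernel_mul_causalGaussian_slice hτ]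
  rw [integral_indicator measurableSet_Ioo, Measure.restrict_restrict_of_subset hsub,
    ← integral_Ioc_eq_integral_Ioo, integral_mul_const, ← intervalIntegral.integral_of_le haq,
    ← mul_assoc, sub_mul_integral_exp_mul_exp]

end Composition

lemma sub_mul_integral_duhamelKernel_mul_duhamelKernel (α β : ℝ) {q r : SpaceTime d}
    (hr : 0 ≤ r.1) (hq : q.1 ≤ T) :
    (α - β) * ∫ p, duhamelKernel β q p * duhamelKernel α p r ∂slabMeasure d T
      = duhamelKernel α q r - duhamelKernel β q r := by
  simp_rw [duhamelKernel_eq_causalGaussian α _ r, mul_left_comm (duhamelKernel β q _)]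
  rw [integral_const_mul, mul_left_comm]
  rcases lt_or_ge r.1 q.1 with hrq | hqr
  · rw [sub_mul_integral_duhamelKernel_mul_causalGaussian hr hrq.le hq
      fun s hs => div_pos (sub_pos.2 hrq) (sub_pos.2 hs.1),
      duhamelKernel_eq_causalGaussian β, causalGaussian, causalGaussian, if_pos hrq, if_pos hrq]
    ring
  · have hzero (p : SpaceTime d) :
        duhamelKernel β q p * causalGaussian α r.1 r.1 r.2 p = 0 :=
      duhamelKernel_mul_causalGaussian_eq_zero fun hp => (hp.1.trans hp.2).not_ge hqr
    rw [duhamelKernel_of_le hqr, causalGaussian, if_neg hqr.not_gt]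
    simp [hzero]

end DuhamelKernel

section CaloricWeight

open Set

variable {d : ℕ} {T c : ℝ} {x₀ : EuclideanSpace ℝ (Fin d)}

/-- The Gaussian profile centred at `x₀` that blows up at time `c`. It solves the heat equation
before time `c`, so the Duhamel operators reproduce it, and on `[0, T]` with `T < c` it dominates
every function of `C_{θ,x₀}` composed with the nonlinearity. -/
noncomputable def caloricWeight (c : ℝ) (x₀ : EuclideanSpace ℝ (Fin d)) (p : SpaceTime d) : ℝ :=
  gaussianProfile (p.1 - c) (p.2 - x₀)

lemma caloricWeight_nonneg (c : ℝ) (x₀ : EuclideanSpace ℝ (Fin d)) (p : SpaceTime d) :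
    0 ≤ caloricWeight c x₀ p :=
  gaussianProfile_nonneg _ _

lemma duhamelKernel_mul_causalGaussian_ae_eq (α b : ℝ) (q : SpaceTime d) :
    (fun p => duhamelKernel α q p * causalGaussian b 0 c x₀ p)
      =ᵐ[slabMeasure d T]
        fun p => duhamelKernel α q p * (Real.exp (b * p.1) * caloricWeight c x₀ p) := by
  filter_upwards [ae_slabMeasure_mem] with p hp
  rw [causalGaussian, if_pos hp.1, sub_zero, caloricWeight]

variable {q : SpaceTime d}

lemma div_sub_pos_of_mem_Ioo (hqc : q.1 < c) {s : ℝ} (hs : s ∈ Ioo 0 q.1) :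
    0 < (q.1 - c) / (s - c) :=
  div_pos_of_neg_of_neg (sub_neg.2 hqc) (sub_neg.2 (hs.2.trans hqc))

lemma integrable_duhamelKernel_mul_exp_mul_caloricWeight (hqc : q.1 < c) (α b : ℝ) :
    Integrable (fun p => duhamelKernel α q p * (Real.exp (b * p.1) * caloricWeight c x₀ p))
      (slabMeasure d T) :=
  (integrable_duhamelKernel_mul_causalGaussian fun _ => div_sub_pos_of_mem_Ioo hqc).congr
    (duhamelKernel_mul_causalGaussian_ae_eq α b q)

lemma integral_duhamelKernel_mul_exp_mul_caloricWeight_le {α b : ℝ} (hαb : α < b)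
    (hq : q.1 ∈ Icc 0 T) (hqc : q.1 < c) :
    ∫ p, duhamelKernel α q p * (Real.exp (b * p.1) * caloricWeight c x₀ p) ∂slabMeasure d T
      ≤ Real.exp (b * q.1) * caloricWeight c x₀ q / (b - α) := by
  rw [← integral_congr_ae (duhamelKernel_mul_causalGaussian_ae_eq α b q),
    le_div_iff₀' (sub_pos.2 hαb), sub_mul_integral_duhamelKernel_mul_causalGaussian le_rfl hq.1
      hq.2 fun _ => div_sub_pos_of_mem_Ioo hqc, sub_zero, ← caloricWeight]
  gcongr
  · exact caloricWeight_nonneg _ _ _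
  · exact sub_le_self _ (Real.exp_nonneg _)

/-- Measurable functions on the slab `(0, T] × ℝ^d` that are bounded by a multiple of
`caloricWeight c x₀`. For `T < c` this class is stable under the Duhamel operators. -/
structure HasCaloricBound (T c : ℝ) (x₀ : EuclideanSpace ℝ (Fin d)) (F : SpaceTime d → ℝ) :
    Prop where
  aestronglyMeasurable : AEStronglyMeasurable F (slabMeasure d T)
  exists_bound : ∃ C, ∀ᵐ p ∂slabMeasure d T, |F p| ≤ C * caloricWeight c x₀ p

namespace HasCaloricBound

variable {F G : SpaceTime d → ℝ}

lemma mono (hG : HasCaloricBound T c x₀ G) (hF : AEStronglyMeasurable F (slabMeasure d T))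
    (hFG : ∀ᵐ p ∂slabMeasure d T, |F p| ≤ |G p|) : HasCaloricBound T c x₀ F where
  aestronglyMeasurable := hF
  exists_bound := by
    obtain ⟨C, hC⟩ := hG.exists_bound
    exact ⟨C, by filter_upwards [hFG, hC] with p using le_trans⟩

lemma abs (hF : HasCaloricBound T c x₀ F) : HasCaloricBound T c x₀ fun p => |F p| :=
  hF.mono hF.aestronglyMeasurable.norm (.of_forall fun p => (abs_abs (F p)).le)

lemma const_mul (hF : HasCaloricBound T c x₀ F) (k : ℝ) :
    HasCaloricBound T c x₀ fun p => k * F p where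
  aestronglyMeasurable := hF.aestronglyMeasurable.const_mul k
  exists_bound := by
    obtain ⟨C, hC⟩ := hF.exists_bound
    refine ⟨|k| * C, ?_⟩
    filter_upwards [hC] with p hp
    rw [abs_mul, mul_assoc]
    gcongr

lemma add (hF : HasCaloricBound T c x₀ F) (hG : HasCaloricBound T c x₀ G) :
    HasCaloricBound T c x₀ fun p => F p + G p where
  aestronglyMeasurable := hF.aestronglyMeasurable.add hG.aestronglyMeasurable
  exists_bound := by
    obtain ⟨C, hC⟩ := hF.exists_bound
    obtain ⟨D, hD⟩ := hG.exists_bound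
    refine ⟨C + D, ?_⟩
    filter_upwards [hC, hD] with p hCp hDp
    rw [add_mul]
    exact (abs_add_le _ _).trans (add_le_add hCp hDp)

lemma sub (hF : HasCaloricBound T c x₀ F) (hG : HasCaloricBound T c x₀ G) :
    HasCaloricBound T c x₀ fun p => F p - G p := by
  simpa only [neg_one_mul, ← sub_eq_add_neg] using hF.add (hG.const_mul (-1))

lemma of_abs_le_exp {B : ℝ} (hTc : T < c) (hF : AEStronglyMeasurable F (slabMeasure d T))
    (hB : ∀ᵐ p ∂slabMeasure d T, |F p| ≤ B * Real.exp (1 / (2 * c) * ‖p.2 - x₀‖ ^ 2)) :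
    HasCaloricBound T c x₀ F where
  aestronglyMeasurable := hF
  exists_bound := by
    refine ⟨|B| * c ^ ((d : ℝ) / 2), ?_⟩
    filter_upwards [hB, ae_slabMeasure_mem] with p hFp hp
    rw [mul_assoc]
    refine hFp.trans (mul_le_mul (le_abs_self B) ?_ (Real.exp_nonneg _) (abs_nonneg B))
    exact exp_le_mul_gaussianProfile hp.1.le (hp.2.trans_lt hTc) _

lemma const (hTc : T < c) (a : ℝ) : HasCaloricBound T c x₀ fun _ => a := by
  refine of_abs_le_exp (B := |a|) hTc aestronglyMeasurable_const ?_
  filter_upwards [ae_slabMeasure_mem] with p hp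
  have hc : 0 < c := hp.1.trans_le hp.2 |>.trans hTc
  exact le_mul_of_one_le_right (abs_nonneg a) (Real.one_le_exp (by positivity))

lemma lipschitzWith_comp {K : NNReal} {g : ℝ → ℝ} (hTc : T < c) (hg : LipschitzWith K g)
    (hF : HasCaloricBound T c x₀ F) : HasCaloricBound T c x₀ fun p => g (F p) := by
  refine ((const hTc |g 0|).add (hF.abs.const_mul K)).mono
    (hg.continuous.comp_aestronglyMeasurable hF.aestronglyMeasurable) (.of_forall fun p => ?_)
  have hlip : |g (F p) - g 0| ≤ K * |F p| := by simpa [Real.dist_eq] using hg.dist_le_mul (F p) 0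
  calc |g (F p)| = |g 0 + (g (F p) - g 0)| := by rw [add_sub_cancel]
    _ ≤ |g 0| + K * |F p| := (abs_add_le _ _).trans (by gcongr)
    _ ≤ |(|g 0| + K * |F p|)| := le_abs_self _

lemma exists_nonneg_exp_bound {b : ℝ} (hb : 0 ≤ b) (hF : HasCaloricBound T c x₀ F) :
    ∃ A, 0 ≤ A ∧ ∀ᵐ p ∂slabMeasure d T,
      |F p| ≤ A * (Real.exp (b * p.1) * caloricWeight c x₀ p) := by
  obtain ⟨C, hC⟩ := hF.exists_bound
  refine ⟨|C|, abs_nonneg C, ?_⟩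
  filter_upwards [hC, ae_slabMeasure_mem] with p hFp hp
  have hw := caloricWeight_nonneg c x₀ p
  calc |F p| ≤ C * caloricWeight c x₀ p := hFp
    _ ≤ |C| * (Real.exp (b * p.1) * caloricWeight c x₀ p) :=
        mul_le_mul (le_abs_self C)
          (le_mul_of_one_le_left hw (Real.one_le_exp (mul_nonneg hb hp.1.le))) hw (abs_nonneg C)

lemma integrable_duhamelKernel_mul (hF : HasCaloricBound T c x₀ F) (hqc : q.1 < c) (α : ℝ) :
    Integrable (fun p => duhamelKernel α q p * F p) (slabMeasure d T) := by
  obtain ⟨A, -, hA⟩ := hF.exists_nonneg_exp_bound le_rfl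
  have hweight := integrable_duhamelKernel_mul_exp_mul_caloricWeight (T := T) (x₀ := x₀) hqc α 0
  refine (hweight.const_mul A).mono'
    ((measurable_duhamelKernel_right α q).aestronglyMeasurable.mul hF.aestronglyMeasurable) ?_
  filter_upwards [hA] with p hp
  rw [norm_mul, Real.norm_of_nonneg (duhamelKernel_nonneg α q p), Real.norm_eq_abs,
    mul_left_comm A]
  exact mul_le_mul_of_nonneg_left hp (duhamelKernel_nonneg α q p)

end HasCaloricBound

end CaloricWeight

section Duhamel

open Set Filter Topology

variable {d : ℕ} {T : ℝ}

/-- The Duhamel operator `F ↦ ∫₀ᵗ ∫ exp(α (t - s)) G(t - s, x - y) F(s, y) dy ds` on the slab, the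
solution operator of `∂ₜ u = Δu/2 + α u + F`, `u(0) = 0`. -/
noncomputable def duhamel (T α : ℝ) (F : SpaceTime d → ℝ) (q : SpaceTime d) : ℝ :=
  ∫ p, duhamelKernel α q p * F p ∂slabMeasure d T

variable {α β : ℝ} {F G : SpaceTime d → ℝ} {q : SpaceTime d}

lemma duhamel_add (hF : Integrable (fun p => duhamelKernel α q p * F p) (slabMeasure d T))
    (hG : Integrable (fun p => duhamelKernel α q p * G p) (slabMeasure d T)) :
    duhamel T α (fun p => F p + G p) q = duhamel T α F q + duhamel T α G q := by
  simp_rw [duhamel, mul_add]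
  exact integral_add hF hG

lemma duhamel_sub (hF : Integrable (fun p => duhamelKernel α q p * F p) (slabMeasure d T))
    (hG : Integrable (fun p => duhamelKernel α q p * G p) (slabMeasure d T)) :
    duhamel T α (fun p => F p - G p) q = duhamel T α F q - duhamel T α G q := by
  simp_rw [duhamel, mul_sub]
  exact integral_sub hF hG

lemma duhamel_const_mul (k : ℝ) (F : SpaceTime d → ℝ) (q : SpaceTime d) :
    duhamel T α (fun p => k * F p) q = k * duhamel T α F q := by
  simp_rw [duhamel, mul_left_comm _ k]
  exact integral_const_mul k _

lemma duhamel_mono (hF : Integrable (fun p => duhamelKernel α q p * F p) (slabMeasure d T))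
    (hG : Integrable (fun p => duhamelKernel α q p * G p) (slabMeasure d T))
    (hFG : ∀ᵐ p ∂slabMeasure d T, F p ≤ G p) : duhamel T α F q ≤ duhamel T α G q := by
  refine integral_mono_ae hF hG ?_
  filter_upwards [hFG] with p hp
  exact mul_le_mul_of_nonneg_left hp (duhamelKernel_nonneg α q p)

lemma abs_duhamel_le (T α : ℝ) (F : SpaceTime d → ℝ) (q : SpaceTime d) :
    |duhamel T α F q| ≤ duhamel T α (fun p => |F p|) q := by
  refine abs_integral_le_integral_abs.trans_eq ?_
  simp_rw [abs_mul, abs_of_nonneg (duhamelKernel_nonneg α q _), duhamel]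

lemma tendsto_duhamel_of_dominated {ι : Type*} {l : Filter ι} [l.IsCountablyGenerated]
    {F : ι → SpaceTime d → ℝ} (hF : ∀ᶠ i in l, AEStronglyMeasurable (F i) (slabMeasure d T))
    (hFG : ∀ᶠ i in l, ∀ᵐ p ∂slabMeasure d T, |F i p| ≤ G p)
    (hG : Integrable (fun p => duhamelKernel α q p * G p) (slabMeasure d T))
    {F₀ : SpaceTime d → ℝ}
    (hlim : ∀ᵐ p ∂slabMeasure d T, Tendsto (fun i => F i p) l (𝓝 (F₀ p))) :
    Tendsto (fun i => duhamel T α (F i) q) l (𝓝 (duhamel T α F₀ q)) := by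
  refine tendsto_integral_filter_of_dominated_convergence _ ?_ ?_ hG ?_
  · filter_upwards [hF] with i hi
    exact (measurable_duhamelKernel_right α q).aestronglyMeasurable.mul hi
  · filter_upwards [hFG] with i hi
    filter_upwards [hi] with p hp
    rw [norm_mul, Real.norm_of_nonneg (duhamelKernel_nonneg α q p)]
    exact mul_le_mul_of_nonneg_left hp (duhamelKernel_nonneg α q p)
  · filter_upwards [hlim] with p hp
    exact hp.const_mul _

lemma duhamel_zero_eq_integral_integral
    (hF : Integrable (fun p => duhamelKernel 0 q p * F p) (slabMeasure d T)) (hqT : q.1 ≤ T) :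
    duhamel T 0 F q
      = ∫ s in Ioc 0 q.1, ∫ y, heatKernel d (q.1 - s) (q.2 - y) * F (s, y) := by
  have hlater (s : ℝ) (hs : s ∈ Ioc 0 T \ Ioo 0 q.1) :
      ∫ y, duhamelKernel 0 q (s, y) * F (s, y) = 0 := by
    have hqs : q.1 ≤ s := not_lt.1 fun h => hs.2 ⟨hs.1.1, h⟩
    simp [duhamelKernel_of_le (p := (s, _)) hqs]
  rw [duhamel, integral_prod _ hF, setIntegral_eq_of_subset_of_forall_sdiff_eq_zero
    measurableSet_Ioc (Ioo_subset_Ioc_self.trans (Ioc_subset_Ioc_right hqT)) hlater,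
    integral_Ioc_eq_integral_Ioo]
  refine setIntegral_congr_fun measurableSet_Ioo fun s hs => ?_
  simp [duhamelKernel_of_lt (p := (s, _)) hs.2]

section Resolvent

variable {c : ℝ} {x₀ : EuclideanSpace ℝ (Fin d)}

lemma duhamel_le_of_le_exp_mul_caloricWeight {A b : ℝ} (hαb : α < b) (hA : 0 ≤ A)
    (hF : HasCaloricBound T c x₀ F)
    (hFA : ∀ᵐ p ∂slabMeasure d T, F p ≤ A * (Real.exp (b * p.1) * caloricWeight c x₀ p))
    (hq : q.1 ∈ Icc 0 T) (hTc : T < c) :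
    duhamel T α F q ≤ A * (Real.exp (b * q.1) * caloricWeight c x₀ q / (b - α)) := by
  have hqc : q.1 < c := hq.2.trans_lt hTc
  have hweight := integrable_duhamelKernel_mul_exp_mul_caloricWeight (T := T) (x₀ := x₀) hqc α b
  calc duhamel T α F q
      ≤ duhamel T α (fun p => A * (Real.exp (b * p.1) * caloricWeight c x₀ p)) q :=
        duhamel_mono (hF.integrable_duhamelKernel_mul hqc α)
          (by simpa only [mul_left_comm A] using hweight.const_mul A) hFA
    _ = A * duhamel T α (fun p => Real.exp (b * p.1) * caloricWeight c x₀ p) q :=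
        duhamel_const_mul A _ q
    _ ≤ A * (Real.exp (b * q.1) * caloricWeight c x₀ q / (b - α)) := by
        gcongr
        exact integral_duhamelKernel_mul_exp_mul_caloricWeight_le hαb hq hqc

lemma HasCaloricBound.duhamel (hF : HasCaloricBound T c x₀ F) (hTc : T < c) (α : ℝ) :
    HasCaloricBound T c x₀ (duhamel T α F) where
  aestronglyMeasurable := AEStronglyMeasurable.integral_prod_right'
    ((measurable_duhamelKernel α).aestronglyMeasurable.mul hF.aestronglyMeasurable.comp_snd)
  exists_bound := by
    have hαb : α < |α| + 1 := (le_abs_self α).trans_lt (lt_add_one _)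
    obtain ⟨A, hA0, hA⟩ := hF.exists_nonneg_exp_bound (b := |α| + 1) (by positivity)
    refine ⟨A * (Real.exp ((|α| + 1) * T) / (|α| + 1 - α)), ?_⟩
    filter_upwards [ae_slabMeasure_mem] with q hq
    have hw := caloricWeight_nonneg c x₀ q
    calc |_root_.duhamel T α F q|
        ≤ _root_.duhamel T α (fun p => |F p|) q := abs_duhamel_le T α F q
      _ ≤ A * (Real.exp ((|α| + 1) * q.1) * caloricWeight c x₀ q / (|α| + 1 - α)) :=
          duhamel_le_of_le_exp_mul_caloricWeight hαb hA0 hF.abs hA (Ioc_subset_Icc_self hq) hTc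
      _ ≤ A * (Real.exp ((|α| + 1) * T) * caloricWeight c x₀ q / (|α| + 1 - α)) := by
          gcongr
          exact hq.2
      _ = A * (Real.exp ((|α| + 1) * T) / (|α| + 1 - α)) * caloricWeight c x₀ q := by ring

lemma HasCaloricBound.integrable_duhamelKernel_mul_duhamelKernel_mul
    (hF : HasCaloricBound T c x₀ F) (hqc : q.1 < c) (hTc : T < c) (α β : ℝ) :
    Integrable (fun w : SpaceTime d × SpaceTime d =>
        duhamelKernel β q w.1 * (duhamelKernel α w.1 w.2 * F w.2))
      ((slabMeasure d T).prod (slabMeasure d T)) := by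
  have hmeas : AEStronglyMeasurable (fun w : SpaceTime d × SpaceTime d =>
      duhamelKernel β q w.1 * (duhamelKernel α w.1 w.2 * F w.2))
      ((slabMeasure d T).prod (slabMeasure d T)) :=
    ((measurable_duhamelKernel_right β q).comp measurable_fst).aestronglyMeasurable.mul
      ((measurable_duhamelKernel α).aestronglyMeasurable.mul hF.aestronglyMeasurable.comp_snd)
  refine (integrable_prod_iff hmeas).2 ⟨?_, ?_⟩
  · filter_upwards [ae_slabMeasure_mem] with p hp
    exact (hF.integrable_duhamelKernel_mul (hp.2.trans_lt hTc) α).const_mul _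
  · simp_rw [norm_mul, Real.norm_of_nonneg (duhamelKernel_nonneg _ _ _), integral_const_mul]
    exact (hF.abs.duhamel hTc α).integrable_duhamelKernel_mul hqc β

lemma sub_mul_duhamel_duhamel (hF : HasCaloricBound T c x₀ F) (hTc : T < c) (hqT : q.1 ≤ T)
    (α β : ℝ) :
    (α - β) * duhamel T β (duhamel T α F) q = duhamel T α F q - duhamel T β F q := by
  have hqc : q.1 < c := hqT.trans_lt hTc
  have hfubini := hF.integrable_duhamelKernel_mul_duhamelKernel_mul hqc hTc α β
  calc (α - β) * duhamel T β (duhamel T α F) q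
      = (α - β) * ∫ p, ∫ r, duhamelKernel β q p * (duhamelKernel α p r * F r)
          ∂slabMeasure d T ∂slabMeasure d T := by
        simp_rw [integral_const_mul, duhamel]
    _ = ∫ r, ((α - β) * ∫ p, duhamelKernel β q p * duhamelKernel α p r ∂slabMeasure d T) * F r
          ∂slabMeasure d T := by
        rw [integral_integral_swap (f := fun p r =>
          duhamelKernel β q p * (duhamelKernel α p r * F r)) hfubini, ← integral_const_mul]
        simp_rw [← mul_assoc (duhamelKernel β q _), integral_mul_const, mul_assoc]
    _ = ∫ r, (duhamelKernel α q r - duhamelKernel β q r) * F r ∂slabMeasure d T := by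
        refine integral_congr_ae ?_
        filter_upwards [ae_slabMeasure_mem] with r hr
        rw [sub_mul_integral_duhamelKernel_mul_duhamelKernel α β hr.1.le hqT]
    _ = duhamel T α F q - duhamel T β F q := by
        simp_rw [sub_mul]
        exact integral_sub (hF.integrable_duhamelKernel_mul hqc α)
          (hF.integrable_duhamelKernel_mul hqc β)

/-- Moving a multiple of the solution into the source changes the discount rate. -/
lemma duhamel_eq_duhamel_add (hF : HasCaloricBound T c x₀ F) (hTc : T < c) (hqT : q.1 ≤ T)
    (α β : ℝ) :
    duhamel T α F q = duhamel T β (fun p => F p + (α - β) * duhamel T α F p) q := by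
  have hqc : q.1 < c := hqT.trans_lt hTc
  rw [duhamel_add (hF.integrable_duhamelKernel_mul hqc β)
    (((hF.duhamel hTc α).const_mul _).integrable_duhamelKernel_mul hqc β), duhamel_const_mul,
    sub_mul_duhamel_duhamel hF hTc hqT, add_sub_cancel]

end Resolvent

end Duhamel

section Comparison

open Set Filter Topology

variable {d : ℕ} {T c k : ℝ} {x₀ : EuclideanSpace ℝ (Fin d)}

lemma le_half_mul_of_le_duhamel {X : SpaceTime d → ℝ} {A b β : ℝ} (hTc : T < c)
    (hX : HasCaloricBound T c x₀ X) (hk : 0 ≤ k) (hA : 0 ≤ A) (hb : β + 2 * k + 1 ≤ b)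
    (hXA : ∀ᵐ p ∂slabMeasure d T, X p ≤ A * (Real.exp (b * p.1) * caloricWeight c x₀ p))
    {q : SpaceTime d} (hq : q.1 ∈ Icc 0 T) (hle : X q ≤ duhamel T β (fun p => k * X p) q) :
    X q ≤ A / 2 * (Real.exp (b * q.1) * caloricWeight c x₀ q) := by
  have hgap : 0 < b - β := by linarith
  have hE : 0 ≤ Real.exp (b * q.1) * caloricWeight c x₀ q :=
    mul_nonneg (Real.exp_nonneg _) (caloricWeight_nonneg _ _ _)
  have hkX : ∀ᵐ p ∂slabMeasure d T,
      k * X p ≤ k * A * (Real.exp (b * p.1) * caloricWeight c x₀ p) := by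
    filter_upwards [hXA] with p hp
    rw [mul_assoc]
    exact mul_le_mul_of_nonneg_left hp hk
  calc X q ≤ duhamel T β (fun p => k * X p) q := hle
    _ ≤ k * A * (Real.exp (b * q.1) * caloricWeight c x₀ q / (b - β)) :=
        duhamel_le_of_le_exp_mul_caloricWeight (sub_pos.1 hgap) (mul_nonneg hk hA)
          (hX.const_mul k) hkX hq hTc
    _ = k / (b - β) * A * (Real.exp (b * q.1) * caloricWeight c x₀ q) := by ring
    _ ≤ 1 / 2 * A * (Real.exp (b * q.1) * caloricWeight c x₀ q) := by
        gcongr ?_ * _ * _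
        rw [div_le_div_iff₀ hgap two_pos]
        linarith
    _ = A / 2 * (Real.exp (b * q.1) * caloricWeight c x₀ q) := by ring

/-- Gronwall's inequality: each application of the Duhamel operator halves the best constant in an
exponentially discounted bound, so that constant is zero. -/
lemma nonpos_of_le_duhamel {X : SpaceTime d → ℝ} {β : ℝ} (hTc : T < c)
    (hX : HasCaloricBound T c x₀ X) (hk : 0 ≤ k)
    (hle : ∀ q, q.1 ∈ Icc 0 T → X q ≤ duhamel T β (fun p => k * X p) q)
    {q : SpaceTime d} (hq : q.1 ∈ Icc 0 T) : X q ≤ 0 := by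
  have hb : β + 2 * k + 1 ≤ |β| + 2 * k + 1 := by gcongr; exact le_abs_self β
  set b := |β| + 2 * k + 1
  obtain ⟨A, hA0, hA⟩ := hX.exists_nonneg_exp_bound (b := b) (by positivity)
  have hhalving (n : ℕ) : ∀ᵐ p ∂slabMeasure d T,
      X p ≤ A * (1 / 2) ^ n * (Real.exp (b * p.1) * caloricWeight c x₀ p) := by
    induction n with
    | zero => filter_upwards [hA] with p hp using by simpa using (le_abs_self _).trans hp
    | succ n ih =>
      filter_upwards [ae_slabMeasure_mem] with p hp
      have hpIcc := Ioc_subset_Icc_self hp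
      refine (le_half_mul_of_le_duhamel hTc hX hk (by positivity) hb ih hpIcc
        (hle p hpIcc)).trans_eq ?_
      ring
  have hlim : Tendsto (fun n : ℕ => A * (1 / 2) ^ n / 2
      * (Real.exp (b * q.1) * caloricWeight c x₀ q)) atTop (𝓝 0) := by
    have hgeom : Tendsto (fun n : ℕ => (1 / 2 : ℝ) ^ n) atTop (𝓝 0) :=
      tendsto_pow_atTop_nhds_zero_of_lt_one (by norm_num) (by norm_num)
    simpa using ((hgeom.const_mul A).div_const 2).mul_const
      (Real.exp (b * q.1) * caloricWeight c x₀ q)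
  exact ge_of_tendsto' hlim fun n =>
    le_half_mul_of_le_duhamel hTc hX hk (by positivity) hb (hhalving n) hq (hle q hq)

/-- A bound on `w = duhamel T 0 F` by a source that is dissipative up to `g`. The hypothesis is how
`sign w · F ≤ κ |w| + g` looks after adding a large multiple `k` of `w` to the source. -/
lemma abs_duhamel_zero_le_duhamel {F g : SpaceTime d → ℝ} {κ : ℝ} (hTc : T < c)
    (hF : HasCaloricBound T c x₀ F) (hg : HasCaloricBound T c x₀ g) (hk : 0 ≤ k)
    (hFg : ∀ᵐ p ∂slabMeasure d T,
      |F p + (k - κ) * duhamel T 0 F p| ≤ k * |duhamel T 0 F p| + g p)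
    {q : SpaceTime d} (hq : q.1 ∈ Icc 0 T) : |duhamel T 0 F q| ≤ duhamel T κ g q := by
  set w := duhamel T 0 F
  set v := duhamel T κ g
  have hw : HasCaloricBound T c x₀ w := hF.duhamel hTc 0
  have hv : HasCaloricBound T c x₀ v := hg.duhamel hTc κ
  refine sub_nonpos.1 (nonpos_of_le_duhamel (X := fun p => |w p| - v p) (β := κ - k) hTc
    (hw.abs.sub hv) hk (fun q hq => ?_) hq)
  have hqc : q.1 < c := hq.2.trans_lt hTc
  have hsource : w q = duhamel T (κ - k) (fun p => F p + (k - κ) * w p) q := by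
    simpa only [zero_sub, neg_sub] using duhamel_eq_duhamel_add hF hTc hq.2 0 (κ - k)
  have hmajorant : v q = duhamel T (κ - k) (fun p => g p + k * v p) q := by
    simpa only [sub_sub_cancel] using duhamel_eq_duhamel_add hg hTc hq.2 κ (κ - k)
  have hw_le : |w q| ≤ duhamel T (κ - k) (fun p => k * |w p| + g p) q := by
    rw [hsource]
    exact (abs_duhamel_le _ _ _ _).trans (duhamel_mono
      ((hF.add (hw.const_mul _)).abs.integrable_duhamelKernel_mul hqc _)
      (((hw.abs.const_mul k).add hg).integrable_duhamelKernel_mul hqc _) hFg)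
  calc |w q| - v q
      ≤ duhamel T (κ - k) (fun p => k * |w p| + g p) q
        - duhamel T (κ - k) (fun p => g p + k * v p) q := by rw [← hmajorant]; gcongr
    _ = duhamel T (κ - k) (fun p => k * |w p| + g p - (g p + k * v p)) q :=
        (duhamel_sub (((hw.abs.const_mul k).add hg).integrable_duhamelKernel_mul hqc _)
          ((hg.add (hv.const_mul k)).integrable_duhamelKernel_mul hqc _)).symm
    _ = duhamel T (κ - k) (fun p => k * (|w p| - v p)) q := by
        congr 1
        ext p
        ring

end Comparison

section Yosida

open Set Filter Topology

variable {φ : ℝ → ℝ} {l : ℝ}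

lemma surjective_sub_mul_of_antitone (hφ : Antitone φ) (hc : Continuous φ) (hl : 0 < l) :
    Function.Surjective fun u => u - l * φ u := by
  refine Continuous.surjective (by fun_prop) ?_ ?_
  · refine tendsto_atTop_mono' _ ?_ (tendsto_atTop_add_const_right _ (-(l * φ 0)) tendsto_id)
    filter_upwards [eventually_ge_atTop 0] with u hu
    have hφu := mul_le_mul_of_nonneg_left (hφ hu) hl.le
    simp only [id]
    linarith
  · refine tendsto_atBot_mono' _ ?_ (tendsto_atBot_add_const_right _ (-(l * φ 0)) tendsto_id)
    filter_upwards [eventually_le_atBot 0] with u hu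
    have hφu := mul_le_mul_of_nonneg_left (hφ hu) hl.le
    simp only [id]
    linarith

lemma Jlam_sub_mul (hφ : Antitone φ) (hc : Continuous φ) (hl : 0 < l) (a : ℝ) :
    Jlam φ l a - l * φ (Jlam φ l a) = a :=
  Function.invFun_eq (surjective_sub_mul_of_antitone hφ hc hl a)

lemma yosida_eq_comp_Jlam (hφ : Antitone φ) (hc : Continuous φ) (hl : 0 < l) (a : ℝ) :
    yosida φ l a = φ (Jlam φ l a) := by
  rw [yosida, div_eq_iff hl.ne']
  linarith [Jlam_sub_mul hφ hc hl a]

lemma lipschitzWith_Jlam (hφ : Antitone φ) (hc : Continuous φ) (hl : 0 < l) :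
    LipschitzWith 1 (Jlam φ l) := by
  refine LipschitzWith.of_le_add fun a b => ?_
  rcases le_total (Jlam φ l a) (Jlam φ l b) with hab | hba
  · exact hab.trans (le_add_of_nonneg_right dist_nonneg)
  · have hdecr := mul_le_mul_of_nonneg_left (hφ hba) hl.le
    have hdist : a - b ≤ dist a b := le_abs_self _
    linarith [Jlam_sub_mul hφ hc hl a, Jlam_sub_mul hφ hc hl b]

/-- `φ_λ + λ⁻¹` is `λ⁻¹` times the nonexpansive map `J_λ`. -/
lemma abs_yosida_sub_yosida_add_le (hφ : Antitone φ) (hc : Continuous φ) (hl : 0 < l) (a b : ℝ) :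
    |yosida φ l a - yosida φ l b + l⁻¹ * (a - b)| ≤ l⁻¹ * |a - b| := by
  have hresolvent : yosida φ l a - yosida φ l b + l⁻¹ * (a - b)
      = l⁻¹ * (Jlam φ l a - Jlam φ l b) := by
    unfold yosida
    ring
  rw [hresolvent, abs_mul, abs_of_pos (inv_pos.2 hl)]
  refine mul_le_mul_of_nonneg_left ?_ (inv_pos.2 hl).le
  simpa [Real.dist_eq] using (lipschitzWith_Jlam hφ hc hl).dist_le_mul a b

lemma abs_yosida_le (hφ : Antitone φ) (hc : Continuous φ) (hl : 0 < l) (u : ℝ) :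
    |yosida φ l u| ≤ |φ u| := by
  have hspec := Jlam_sub_mul hφ hc hl u
  rw [yosida_eq_comp_Jlam hφ hc hl]
  rcases le_total u (Jlam φ l u) with hu | hu
  · have hpos : 0 ≤ φ (Jlam φ l u) := nonneg_of_mul_nonneg_right (by linarith) hl
    exact abs_le_abs_of_nonneg hpos (hφ hu)
  · have hneg : φ (Jlam φ l u) ≤ 0 := nonpos_of_mul_nonpos_right (by linarith) hl
    exact abs_le_abs_of_nonpos hneg (hφ hu)

lemma tendsto_yosida (hφ : Antitone φ) (hc : Continuous φ) (u : ℝ) :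
    Tendsto (fun l => yosida φ l u) (𝓝[>] 0) (𝓝 (φ u)) := by
  have hdist : ∀ᶠ l in 𝓝[>] 0, dist (Jlam φ l u) u ≤ l * |φ u| := by
    filter_upwards [self_mem_nhdsWithin] with l hl
    have hJ : Jlam φ l u - u = l * yosida φ l u := by rw [yosida, mul_div_cancel₀ _ hl.ne']
    rw [Real.dist_eq, hJ, abs_mul, abs_of_pos hl]
    exact mul_le_mul_of_nonneg_left (abs_yosida_le hφ hc hl u) hl.le
  have hzero : Tendsto (fun l : ℝ => l * |φ u|) (𝓝[>] 0) (𝓝 0) :=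
    ((continuous_mul_const _).tendsto' 0 0 (zero_mul _)).mono_left nhdsWithin_le_nhds
  have hJ : Tendsto (fun l => Jlam φ l u) (𝓝[>] 0) (𝓝 u) :=
    tendsto_iff_dist_tendsto_zero.2
      (squeeze_zero' (.of_forall fun _ => dist_nonneg) hdist hzero)
  refine ((hc.tendsto u).comp hJ).congr' ?_
  filter_upwards [self_mem_nhdsWithin] with l hl
  exact (yosida_eq_comp_Jlam hφ hc hl u).symm

end Yosida

section Convergence

open Set Filter Topology

variable {d : ℕ} {T c : ℝ} {x₀ : EuclideanSpace ℝ (Fin d)} {φ : ℝ → ℝ}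

lemma HasCaloricBound.yosida_comp {l : ℝ} {N : SpaceTime d → ℝ} (hN : HasCaloricBound T c x₀ N)
    (hTc : T < c) (hφ : Antitone φ) (hc : Continuous φ) (hl : 0 < l) :
    HasCaloricBound T c x₀ fun p => yosida φ l (N p) := by
  simpa only [yosida, div_eq_inv_mul] using
    ((HasCaloricBound.lipschitzWith_comp hTc (lipschitzWith_Jlam hφ hc hl) hN).sub hN).const_mul l⁻¹

lemma abs_sub_le_duhamel_abs_yosida_sub {l κ : ℝ} {N M : SpaceTime d → ℝ} (hTc : T < c)
    (hφ : Antitone φ) (hc : Continuous φ) (hl : 0 < l) (hN : HasCaloricBound T c x₀ N)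
    (hM : HasCaloricBound T c x₀ M) (hφM : HasCaloricBound T c x₀ fun p => φ (M p))
    (hNM : ∀ q, q.1 ∈ Icc 0 T → N q - M q = duhamel T 0
      (fun p => yosida φ l (N p) + κ * N p - (φ (M p) + κ * M p)) q)
    {q : SpaceTime d} (hq : q.1 ∈ Icc 0 T) :
    |N q - M q| ≤ duhamel T κ (fun p => |yosida φ l (M p) - φ (M p)|) q := by
  rw [hNM q hq]
  refine abs_duhamel_zero_le_duhamel (k := l⁻¹) hTc
    (((hN.yosida_comp hTc hφ hc hl).add (hN.const_mul κ)).sub (hφM.add (hM.const_mul κ)))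
    ((hM.yosida_comp hTc hφ hc hl).sub hφM).abs (inv_nonneg.2 hl.le) ?_ hq
  filter_upwards [ae_slabMeasure_mem] with p hp
  rw [← hNM p (Ioc_subset_Icc_self hp)]
  calc |yosida φ l (N p) + κ * N p - (φ (M p) + κ * M p) + (l⁻¹ - κ) * (N p - M p)|
      = |(yosida φ l (N p) - yosida φ l (M p) + l⁻¹ * (N p - M p))
          + (yosida φ l (M p) - φ (M p))| := by ring_nf
    _ ≤ l⁻¹ * |N p - M p| + |yosida φ l (M p) - φ (M p)| :=
        (abs_add_le _ _).trans (add_le_add_left (abs_yosida_sub_yosida_add_le hφ hc hl _ _) _)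

lemma tendsto_duhamel_abs_yosida_sub {M : SpaceTime d → ℝ} (hTc : T < c)
    (hφ : Antitone φ) (hc : Continuous φ) (hM : HasCaloricBound T c x₀ M)
    (hφM : HasCaloricBound T c x₀ fun p => φ (M p)) {q : SpaceTime d} (hqT : q.1 ≤ T) (κ : ℝ) :
    Tendsto (fun l => duhamel T κ (fun p => |yosida φ l (M p) - φ (M p)|) q) (𝓝[>] 0) (𝓝 0) := by
  have hlim := tendsto_duhamel_of_dominated (T := T) (α := κ) (q := q) (l := 𝓝[>] (0 : ℝ))
    (F := fun l p => |yosida φ l (M p) - φ (M p)|) (F₀ := fun _ => 0)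
    (G := fun p => 2 * |φ (M p)|) ?_ ?_ ?_ ?_
  · simpa [duhamel] using hlim
  · filter_upwards [self_mem_nhdsWithin] with l hl
    exact ((hM.yosida_comp hTc hφ hc hl).sub hφM).abs.aestronglyMeasurable
  · filter_upwards [self_mem_nhdsWithin] with l hl
    refine .of_forall fun p => ?_
    rw [abs_abs, two_mul]
    exact (abs_sub _ _).trans (add_le_add_left (abs_yosida_le hφ hc hl _) _)
  · exact (hφM.abs.const_mul 2).integrable_duhamelKernel_mul (hqT.trans_lt hTc) κ
  · refine .of_forall fun p => ?_
    simpa using ((tendsto_yosida hφ hc (M p)).sub_const (φ (M p))).abs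

theorem yosida_solutions_tendsto_general {f : ℝ → ℝ} {κ : ℝ} (hTc : T < c) (hf : Continuous f)
    (hφ : Antitone fun u => f u - κ * u) {z : ℝ → EuclideanSpace ℝ (Fin d) → ℝ}
    {mlam : ℝ → ℝ → EuclideanSpace ℝ (Fin d) → ℝ} {m : ℝ → EuclideanSpace ℝ (Fin d) → ℝ}
    (hmlam : ∀ᶠ lam in 𝓝[>] 0, HasCaloricBound T c x₀ (fun p => mlam lam p.1 p.2) ∧
      ∀ t ∈ Icc 0 T, ∀ x, mlam lam t x = (∫ s in Ioc 0 t, ∫ y, heatKernel d (t - s) (x - y) *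
        (yosida (fun u => f u - κ * u) lam (mlam lam s y) + κ * mlam lam s y)) + z t x)
    (hm : HasCaloricBound T c x₀ fun p => m p.1 p.2)
    (hfm : HasCaloricBound T c x₀ fun p => f (m p.1 p.2))
    (hmeq : ∀ t ∈ Icc 0 T, ∀ x, m t x
      = (∫ s in Ioc 0 t, ∫ y, heatKernel d (t - s) (x - y) * f (m s y)) + z t x) :
    ∀ t ∈ Icc 0 T, ∀ x, Tendsto (fun lam => mlam lam t x) (𝓝[>] 0) (𝓝 (m t x)) := by
  intro t ht x
  have hc : Continuous fun u => f u - κ * u := by fun_prop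
  have hφm := hfm.sub (hm.const_mul κ)
  refine tendsto_iff_dist_tendsto_zero.2 (squeeze_zero' (.of_forall fun _ => dist_nonneg) ?_
    (tendsto_duhamel_abs_yosida_sub (q := (t, x)) hTc hφ hc hm hφm ht.2 κ))
  filter_upwards [hmlam, self_mem_nhdsWithin] with lam ⟨hN, hNeq⟩ hlam
  refine abs_sub_le_duhamel_abs_yosida_sub (N := fun p => mlam lam p.1 p.2)
    (M := fun p => m p.1 p.2) (q := (t, x)) hTc hφ hc hlam hN hm hφm (fun q hq => ?_) ht
  have hqc : q.1 < c := hq.2.trans_lt hTc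
  have hsource := (hN.yosida_comp hTc hφ hc hlam).add (hN.const_mul κ)
  simp only [sub_add_cancel]
  rw [hNeq q.1 hq q.2, hmeq q.1 hq q.2, add_sub_add_right_eq_sub,
    duhamel_sub (hsource.integrable_duhamelKernel_mul hqc 0)
      (hfm.integrable_duhamelKernel_mul hqc 0),
    duhamel_zero_eq_integral_integral (hsource.integrable_duhamelKernel_mul hqc 0) hq.2,
    duhamel_zero_eq_integral_integral (hfm.integrable_duhamelKernel_mul hqc 0) hq.2]

end Convergence

section Growth

open Set

lemma exists_mul_rpow_le_add_mul_rpow {p q δ : ℝ} (hp : 0 ≤ p) (hpq : p < q) (hδ : 0 < δ)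
    (D : ℝ) : ∃ A, ∀ r, 0 ≤ r → D * r ^ p ≤ A + δ * r ^ q := by
  have hgap : 0 < q - p := sub_pos.2 hpq
  set R := (|D| / δ) ^ (q - p)⁻¹
  have hR : R ^ (q - p) = |D| / δ := Real.rpow_inv_rpow (by positivity) hgap.ne'
  refine ⟨|D| * R ^ p, fun r hr => ?_⟩
  have hDr : D * r ^ p ≤ |D| * r ^ p := by gcongr; exact le_abs_self D
  rcases le_total r R with hrR | hRr
  · have hnear : |D| * r ^ p ≤ |D| * R ^ p := by gcongr
    have hfar : 0 ≤ δ * r ^ q := by positivity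
    linarith
  · have hD : |D| ≤ δ * r ^ (q - p) := by
      rw [← div_le_iff₀' hδ, ← hR]
      gcongr
    have hfar : |D| * r ^ p ≤ δ * r ^ q :=
      calc |D| * r ^ p ≤ δ * r ^ (q - p) * r ^ p := by gcongr
        _ = δ * r ^ q := by
          rw [mul_assoc, ← Real.rpow_add_of_nonneg hr hgap.le hp, sub_add_cancel]
    have hnear : 0 ≤ |D| * R ^ p := by positivity
    linarith

lemma abs_le_exp_inv_mul_rpow {ν : ℝ} (hν : 0 < ν) (u : ℝ) :
    |u| ≤ Real.exp (ν⁻¹ * |u| ^ ν) := by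
  rw [← div_eq_inv_mul]
  exact (Real.le_exp_log _).trans (Real.exp_le_exp.2 (Real.log_le_rpow_div (abs_nonneg u) hν))

lemma abs_le_mul_exp_of_abs_deriv_le {f : ℝ → ℝ} {K ν : ℝ} (hK : 0 ≤ K) (hν : 0 < ν)
    (hf : Differentiable ℝ f) (hderiv : ∀ u, |deriv f u| ≤ K * Real.exp (K * |u| ^ ν)) (u : ℝ) :
    |f u| ≤ (|f 0| + K) * Real.exp ((K + ν⁻¹) * |u| ^ ν) := by
  have hmvt : |f u - f 0| ≤ K * Real.exp (K * |u| ^ ν) * |u| := by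
    have hbound (v : ℝ) (hv : v ∈ Metric.closedBall (0 : ℝ) |u|) :
        ‖deriv f v‖ ≤ K * Real.exp (K * |u| ^ ν) := by
      have hvu : |v| ≤ |u| := by simpa using hv
      exact (hderiv v).trans (by gcongr)
    simpa using (convex_closedBall (0 : ℝ) |u|).norm_image_sub_le_of_norm_deriv_le
      (fun v _ => hf v) hbound (Metric.mem_closedBall_self (abs_nonneg u)) (y := u) (by simp)
  calc |f u| = |f 0 + (f u - f 0)| := by rw [add_sub_cancel]
    _ ≤ |f 0| + |f u - f 0| := abs_add_le _ _
    _ ≤ |f 0| * Real.exp ((K + ν⁻¹) * |u| ^ ν)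
        + K * Real.exp (K * |u| ^ ν) * Real.exp (ν⁻¹ * |u| ^ ν) := by
        gcongr
        · exact le_mul_of_one_le_right (abs_nonneg _) (Real.one_le_exp (by positivity))
        · exact hmvt.trans (by gcongr; exact abs_le_exp_inv_mul_rpow hν u)
    _ = (|f 0| + K) * Real.exp ((K + ν⁻¹) * |u| ^ ν) := by
        rw [mul_assoc K, ← Real.exp_add, ← add_mul, ← add_mul]

lemma antitone_sub_mul_of_deriv_le {f : ℝ → ℝ} {κ : ℝ} (hf : Differentiable ℝ f)
    (hderiv : ∀ u, deriv f u ≤ κ) : Antitone fun u => f u - κ * u := by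
  refine antitone_of_deriv_nonpos (by fun_prop) fun u => ?_
  rw [((hf u).hasDerivAt.fun_sub (hasDerivAt_const_mul κ)).deriv]
  exact sub_nonpos.2 (hderiv u)

namespace memC

variable {d : ℕ} {T θ ν : ℝ} {x₀ : EuclideanSpace ℝ (Fin d)}
  {u : ℝ → EuclideanSpace ℝ (Fin d) → ℝ}

lemma exists_abs_le (hu : memC d T θ x₀ u) :
    ∃ A, 0 ≤ A ∧ ∀ t ∈ Icc 0 T, ∀ x, |u t x| ≤ A * (1 + ‖x - x₀‖ ^ θ) := by
  obtain ⟨R, hR⟩ := hu.2 1 one_pos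
  obtain ⟨M, hM⟩ := (isCompact_Icc.prod (isCompact_closedBall 0 R)).exists_bound_of_continuousOn
    (hu.1.mono (prod_mono_right (subset_univ _)))
  refine ⟨max 1 M, by positivity, fun t ht x => ?_⟩
  have hrpow : 0 ≤ ‖x - x₀‖ ^ θ := by positivity
  rcases le_total R ‖x‖ with hx | hx
  · calc |u t x| ≤ 1 * (1 + ‖x - x₀‖ ^ θ) :=
          (div_le_iff₀ (by positivity)).1 (hR x hx t ht).le
      _ ≤ max 1 M * (1 + ‖x - x₀‖ ^ θ) := by gcongr; exact le_max_left _ _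
  · calc |u t x| ≤ M := hM (t, x) ⟨ht, by simpa using hx⟩
      _ ≤ max 1 M := le_max_right _ _
      _ ≤ max 1 M * (1 + ‖x - x₀‖ ^ θ) :=
          le_mul_of_one_le_right (by positivity) (le_add_of_nonneg_right hrpow)

lemma exists_mul_rpow_abs_le {B δ : ℝ} (hθ : 0 ≤ θ) (hν : 0 ≤ ν) (hθν : θ * ν < 2) (hB : 0 ≤ B)
    (hδ : 0 < δ) (hu : memC d T θ x₀ u) :
    ∃ C, ∀ t ∈ Icc 0 T, ∀ x, B * |u t x| ^ ν ≤ C + δ * ‖x - x₀‖ ^ 2 := by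
  obtain ⟨A, hA0, hA⟩ := hu.exists_abs_le
  obtain ⟨C, hC⟩ :=
    exists_mul_rpow_le_add_mul_rpow (mul_nonneg hθ hν) hθν hδ (B * (A * 2) ^ ν)
  refine ⟨C + δ, fun t ht x => ?_⟩
  set r := max 1 ‖x - x₀‖
  have hr1 : 1 ≤ r := le_max_left _ _
  have hr_sq : r ^ 2 ≤ 1 + ‖x - x₀‖ ^ 2 := by
    rcases max_choice 1 ‖x - x₀‖ with h | h <;> simp only [r, h] <;> nlinarith [sq_nonneg ‖x - x₀‖]
  have hweight : 1 + ‖x - x₀‖ ^ θ ≤ 2 * r ^ θ := by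
    have hone : 1 ≤ r ^ θ := Real.one_le_rpow hr1 hθ
    have hnorm : ‖x - x₀‖ ^ θ ≤ r ^ θ := by gcongr; exact le_max_right _ _
    linarith
  calc B * |u t x| ^ ν ≤ B * (A * (2 * r ^ θ)) ^ ν := by
        gcongr
        exact (hA t ht x).trans (by gcongr)
    _ = B * (A * 2) ^ ν * r ^ (θ * ν) := by
        rw [← mul_assoc A, Real.mul_rpow (by positivity) (by positivity), ← Real.rpow_mul
          (by positivity), mul_assoc]
    _ ≤ C + δ * r ^ 2 := mod_cast hC r (by positivity)
    _ ≤ C + δ * (1 + ‖x - x₀‖ ^ 2) := by gcongr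
    _ = C + δ + δ * ‖x - x₀‖ ^ 2 := by ring

lemma aestronglyMeasurable (hu : memC d T θ x₀ u) :
    AEStronglyMeasurable (fun p : SpaceTime d => u p.1 p.2) (slabMeasure d T) := by
  have hslab : slabMeasure d T = (volume.prod volume).restrict (Ioc 0 T ×ˢ univ) := by
    rw [← Measure.prod_restrict, Measure.restrict_univ]
  rw [hslab]
  exact (hu.1.mono (prod_mono_left Ioc_subset_Icc_self)).aestronglyMeasurable
    (measurableSet_Ioc.prod .univ)

lemma hasCaloricBound_comp {h : ℝ → ℝ} {A B c : ℝ} (hu : memC d T θ x₀ u) (hθ : 0 ≤ θ)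
    (hν : 0 ≤ ν) (hθν : θ * ν < 2) (hc : 0 < c) (hTc : T < c) (hcont : Continuous h) (hB : 0 ≤ B)
    (hgrowth : ∀ v, |h v| ≤ A * Real.exp (B * |v| ^ ν)) :
    HasCaloricBound T c x₀ fun p => h (u p.1 p.2) := by
  have hA : 0 ≤ A :=
    nonneg_of_mul_nonneg_left ((abs_nonneg _).trans (hgrowth 0)) (Real.exp_pos _)
  obtain ⟨C, hC⟩ := hu.exists_mul_rpow_abs_le hθ hν hθν hB (δ := 1 / (2 * c)) (by positivity)
  refine .of_abs_le_exp (B := A * Real.exp C) hTc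
    (hcont.comp_aestronglyMeasurable hu.aestronglyMeasurable) ?_
  filter_upwards [ae_slabMeasure_mem] with p hp
  rw [mul_assoc, ← Real.exp_add]
  refine (hgrowth _).trans ?_
  gcongr
  exact hC p.1 (Ioc_subset_Icc_self hp) p.2

end memC

end Growth

/-- Convergence of the Yosida-approximated solutions: if `m_λ ∈ C_{θ,x₀}`
solves the integral equation with reaction term `f_λ(u) = φ_λ(u) + κ u`
(where `φ(u) = f(u) - κ u`) and `m ∈ C_{θ,x₀}` solves the equation with `f`,
then `m_λ(t,x) → m(t,x)` as `λ → 0⁺`, for every `(t,x) ∈ [0,T] × ℝ^d`. -/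
theorem yosida_solutions_tendsto
    (d : ℕ) (hd : 1 ≤ d) (T : ℝ) (hT : 0 < T)
    (x₀ : EuclideanSpace ℝ (Fin d))
    (f : ℝ → ℝ) (κ K ν : ℝ) (hK : 0 < K) (hν : 0 < ν)
    (hf : ContDiff ℝ 1 f) (hderiv : ∀ u : ℝ, deriv f u ≤ κ)
    (hgrowth : ∀ u : ℝ, |deriv f u| ≤ K * Real.exp (K * |u| ^ ν))
    (θ : ℝ) (hθ : θ ∈ Set.Ioo (0 : ℝ) (2 / ν))
    (z : ℝ → EuclideanSpace ℝ (Fin d) → ℝ) (hz : memC d T θ x₀ z)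
    (mlam : ℝ → ℝ → EuclideanSpace ℝ (Fin d) → ℝ)
    (hmlam : ∀ lam ∈ Set.Ioo (0 : ℝ) 1, memC d T θ x₀ (mlam lam) ∧
      ∀ t ∈ Set.Icc (0 : ℝ) T, ∀ x : EuclideanSpace ℝ (Fin d),
        mlam lam t x = (∫ s in Set.Ioc (0 : ℝ) t,
          ∫ y, heatKernel d (t - s) (x - y) *
            (yosida (fun u => f u - κ * u) lam (mlam lam s y) + κ * mlam lam s y))
          + z t x)
    (m : ℝ → EuclideanSpace ℝ (Fin d) → ℝ) (hm : memC d T θ x₀ m)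
    (hmeq : ∀ t ∈ Set.Icc (0 : ℝ) T, ∀ x : EuclideanSpace ℝ (Fin d),
      m t x = (∫ s in Set.Ioc (0 : ℝ) t,
        ∫ y, heatKernel d (t - s) (x - y) * f (m s y)) + z t x) :
    ∀ t ∈ Set.Icc (0 : ℝ) T, ∀ x : EuclideanSpace ℝ (Fin d),
      Filter.Tendsto (fun lam : ℝ => mlam lam t x)
        (nhdsWithin 0 (Set.Ioo (0 : ℝ) 1)) (nhds (m t x)) := by
  have hfd : Differentiable ℝ f := hf.differentiable one_ne_zero
  have hθν : θ * ν < 2 := (lt_div_iff₀ hν).1 hθ.2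
  have hTc : T < T + 1 := lt_add_one T
  have hid {u : ℝ → EuclideanSpace ℝ (Fin d) → ℝ} (hu : memC d T θ x₀ u) :
      HasCaloricBound T (T + 1) x₀ fun p => u p.1 p.2 :=
    hu.hasCaloricBound_comp (A := 1) hθ.1.le hν.le hθν (hT.trans hTc) hTc continuous_id
      (inv_nonneg.2 hν.le) fun v => by simpa using abs_le_exp_inv_mul_rpow hν v
  rw [nhdsWithin_Ioo_eq_nhdsGT one_pos]
  refine yosida_solutions_tendsto_general hTc hf.continuous
    (antitone_sub_mul_of_deriv_le hfd hderiv) ?_ (hid hm)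
    (hm.hasCaloricBound_comp hθ.1.le hν.le hθν (hT.trans hTc) hTc hf.continuous (by positivity)
      (abs_le_mul_exp_of_abs_deriv_le hK.le hν hfd hgrowth)) hmeq
  filter_upwards [Ioo_mem_nhdsGT one_pos] with lam hlam
  exact ⟨hid (hmlam lam hlam).1, (hmlam lam hlam).2⟩
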